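/- Continuum of solutions with arbitrarily large norm on finite graphs: Let G = (V(G),E(G)) be a weighted graph and Ω ⊂ V(G) a finite m^G-connected subset with nonempty m^G-boundary. Let f ∈ C¹([0,∞)) be strictly convex, increasing, with f(0) > 0 and lim_{s→∞} f(s)/s = +∞ (so f satisfies hypotheses (H)), let λ* be the extremal parameter of (P(λf)), and let g₂⁻¹ be the decreasing branch inverse of g(s) = s/f(s) as in the context. Set S* := {(λ,u) ∈ [0,λ*] × L^∞(Ω_m,ν_G) : u is a solution of (P(λf))}. Then for every 0 < ε < λ* there exists 0 < λ < ε such that (P(λf)) has a solution u^λ with ‖u^λ‖_∞ = g₂⁻¹(ε); moreover, the connected component of S* containing (0,0) also contains (λ, u^λ). In particular, there is a continuum branch of solutions u^λ with ‖u^λ‖_∞ → +∞ as λ → 0⁺. -/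

import Mathlib

open Set

/-- The weighted degree `d_x = Σ_y w_{xy}` of a vertex in a weighted graph. -/
noncomputable def degG {V : Type*} (w : V → V → ℝ) (x : V) : ℝ := ∑' y, w x y

/-- The (normalized) graph Laplacian `Δ u(x) = (1/d_x) Σ_y w_{xy}(u(y) − u(x))`. -/
noncomputable def lapG {V : Type*} (w : V → V → ℝ) (u : V → ℝ) (x : V) : ℝ :=
  (∑' y, w x y * (u y - u x)) / degG w x

/-- The `m^G`-boundary of `Ω` in a weighted graph. -/
def bdryG {V : Type*} (w : V → V → ℝ) (Ω : Set V) : Set V :=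
  {x | x ∉ Ω ∧ ∃ y ∈ Ω, 0 < w x y}

/-- The `m^G`-closure of `Ω` in a weighted graph. -/
def closG {V : Type*} (w : V → V → ℝ) (Ω : Set V) : Set V := Ω ∪ bdryG w Ω

/-- `Ω` is `m^G`-connected. -/
def connG {V : Type*} (w : V → V → ℝ) (Ω : Set V) : Prop :=
  ∀ A B : Set V, A.Nonempty → B.Nonempty → A ⊆ Ω → B ⊆ Ω → A ∪ B = Ω →
    ∃ x ∈ A, ∃ y ∈ B, 0 < w x y

/-- A (nonnegative) solution of the Gelfand problem `(P(λ f))` on a weighted graph: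
`u = 0` outside `Ω` (in particular on the Dirichlet boundary `∂_{m^G}Ω`), `u ≥ 0`, and
`−Δ_{m^G} u = λ f(u)` on `Ω`. -/
def IsSolG {V : Type*} (w : V → V → ℝ) (Ω : Set V) (lam : ℝ) (f : ℝ → ℝ)
    (u : V → ℝ) : Prop :=
  (∀ x ∉ Ω, u x = 0) ∧ (∀ x, 0 ≤ u x) ∧ ∀ x ∈ Ω, -(lapG w u x) = lam * f (u x)

/-- The extremal parameter `λ*` on a weighted graph. -/
noncomputable def lamStarG {V : Type*} (w : V → V → ℝ) (Ω : Set V) (f : ℝ → ℝ) : ℝ :=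
  sSup {lam : ℝ | 0 ≤ lam ∧ ∃ u : V → ℝ, IsSolG w Ω lam f u}

/-!
Brouwer's theorem is obtained without degree theory: for a compactly supported `C¹` map `h`, the
integral of `det (1 + t Dh) · p(‖x + t h x‖²)` over a ball is a polynomial in `t` (an idea of Milnor
and Rogers), constant for small `t` by change of variables, hence constant. Twisting a homotopy by
a function that separates components then shows that its fixed points contain a continuum joining
its two ends.

The maximum principle inverts the Dirichlet Laplacian and turns `(P(λf))` into `u = λ N(u)` with
`N` positive; rescaling `N` to norm `s M`, `0 ≤ s ≤ 1`, yields a continuum of solutions from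
`(0, 0)` to some `(λ, u)` with `‖u‖ = M`. At a maximum point of `u` the equation forces
`λ f(M) < M`, which for `M = g₂⁻¹(ε)` reads `λ < ε`. The tangent to `f` through the origin touches
it at `s₀`, whence `λ* ≤ s₀ / f(s₀)` and `ε` lies in the domain of `g₂⁻¹`.
-/

section IntegralIdentity

open MeasureTheory Polynomial Topology
open scoped NNReal

lemma exists_polynomial_eval_eq_integral {α : Type*} [MeasurableSpace α] {μ : Measure α}
    {g : ℝ → α → ℝ} {n : ℕ} (hint : ∀ t, Integrable (g t) μ)
    (hpoly : ∀ x, ∃ P : ℝ[X], P.natDegree ≤ n ∧ ∀ t, P.eval t = g t x) :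
    ∃ P : ℝ[X], ∀ t, P.eval t = ∫ x, g t x ∂μ := by
  let nodes := Finset.range (n + 1)
  let v : ℕ → ℝ := Nat.cast
  refine ⟨Lagrange.interpolate nodes v fun k => ∫ x, g (v k) x ∂μ, fun t => ?_⟩
  have hg : ∀ x, g t x = ∑ k ∈ nodes, g (v k) x * (Lagrange.basis nodes v k).eval t := by
    intro x
    obtain ⟨P, hdeg, hP⟩ := hpoly x
    have hdeg' : P.degree < nodes.card := by
      rw [Finset.card_range]
      exact degree_le_natDegree.trans_lt (Nat.cast_lt.2 (Nat.lt_succ_of_le hdeg))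
    have h := congrArg (eval t) (Lagrange.eq_interpolate (v := v)
      Nat.cast_injective.injOn hdeg')
    simpa only [hP, Lagrange.interpolate_apply, eval_finsetSum, eval_mul, eval_C] using h
  simp_rw [hg, Lagrange.interpolate_apply, eval_finsetSum, eval_mul, eval_C]
  rw [integral_finsetSum _ fun k _ => (hint (v k)).mul_const _]
  simp_rw [integral_mul_const]

lemma setIntegral_mul_comp_eq_setIntegral_comp_of_polynomial {X : Type*} [TopologicalSpace X]
    [T2Space X] [MeasurableSpace X] [OpensMeasurableSpace X] {μ : Measure X}
    [IsFiniteMeasureOnCompacts μ] {S : Set X} (hS : IsCompact S) {J a b : X → ℝ}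
    (hJ : Continuous J) (ha : Continuous a) (hb : Continuous b)
    (h : ∀ p : ℝ[X], ∫ x in S, J x * p.eval (a x) ∂μ = ∫ x in S, p.eval (b x) ∂μ)
    {β : ℝ → ℝ} (hβ : Continuous β) :
    ∫ x in S, J x * β (a x) ∂μ = ∫ x in S, β (b x) ∂μ := by
  have hint : ∀ {g : X → ℝ}, Continuous g → IntegrableOn g S μ :=
    fun hg => hg.continuousOn.integrableOn_compact hS
  let g : (ℝ → ℝ) → X → ℝ := fun γ x => J x * γ (a x) - γ (b x)
  have hg : ∀ {γ : ℝ → ℝ}, Continuous γ → ∫ x in S, g γ x ∂μ =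
      ∫ x in S, J x * γ (a x) ∂μ - ∫ x in S, γ (b x) ∂μ :=
    fun hγ => integral_sub (hint (by fun_prop)) (hint (by fun_prop))
  obtain ⟨R, hR⟩ := hS.exists_bound_of_continuousOn (ha.prodMk hb).continuousOn
  have hbound : ∀ ε > 0, ‖∫ x in S, g β x ∂μ‖ ≤ ε * ∫ x in S, (|J x| + 1) ∂μ := by
    intro ε hε
    obtain ⟨p, hp⟩ := exists_polynomial_near_of_continuousOn (-R) R β hβ.continuousOn ε hε
    have hpcont : Continuous fun s => p.eval s := p.continuous
    have hzero : ∫ x in S, g p.eval x ∂μ = 0 := by rw [hg hpcont, h, sub_self]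
    have hnear : ∀ x ∈ S, ‖g β x - g p.eval x‖ ≤ ε * (|J x| + 1) := by
      intro x hx
      have hpa := (hp (a x) (abs_le.1 ((norm_fst_le _).trans (hR x hx)))).le
      have hpb := (hp (b x) (abs_le.1 ((norm_snd_le _).trans (hR x hx)))).le
      calc ‖g β x - g p.eval x‖ = |(p.eval (b x) - β (b x)) - J x * (p.eval (a x) - β (a x))| := by
            rw [Real.norm_eq_abs]
            congr 1
            ring
        _ ≤ ε + |J x| * ε := by
            refine (abs_sub _ _).trans (add_le_add hpb ?_)
            rw [abs_mul]
            gcongr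
        _ = ε * (|J x| + 1) := by ring
    calc ‖∫ x in S, g β x ∂μ‖ = ‖∫ x in S, (g β x - g p.eval x) ∂μ‖ := by
          rw [integral_sub (f := g β) (g := g p.eval) (hint (by fun_prop)) (hint (by fun_prop)),
            hzero, sub_zero]
      _ ≤ ∫ x in S, ε * (|J x| + 1) ∂μ := norm_integral_le_of_norm_le
          (hint (by fun_prop)) (ae_restrict_of_forall_mem hS.measurableSet hnear)
      _ = ε * ∫ x in S, (|J x| + 1) ∂μ := integral_const_mul ε _
  rw [← sub_eq_zero, ← hg hβ, ← norm_le_zero_iff]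
  have htendsto : Filter.Tendsto (· * ∫ x in S, (|J x| + 1) ∂μ) (𝓝[>] 0) (𝓝 0) :=
    ((continuous_mul_const _).tendsto' 0 0 (zero_mul _)).mono_left nhdsWithin_le_nhds
  exact ge_of_tendsto htendsto (eventually_mem_nhdsWithin.mono hbound)

lemma exists_polynomial_eval_eq_det_one_add_smul {R M : Type*} [CommRing R] [Nontrivial R]
    [AddCommGroup M] [Module R M] [Module.Free R M] [Module.Finite R M] (A : M →ₗ[R] M) :
    ∃ P : R[X], P.natDegree ≤ Module.finrank R M ∧
      ∀ t, P.eval t = LinearMap.det (1 + t • A) := by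
  classical
  let b := Module.Free.chooseBasis R M
  let B := LinearMap.toMatrix b b A
  refine ⟨((X : R[X]) • B.map C + (1 : Matrix _ _ R).map C).det, ?_, fun t => ?_⟩
  · rw [Module.finrank_eq_card_basis b]
    exact natDegree_det_X_add_C_le B 1
  · change evalRingHom t (Matrix.det _) = _
    rw [RingHom.map_det, ← LinearMap.det_toMatrix b]
    congr 1
    ext i j
    rcases eq_or_ne i j with rfl | hij
    · simp [B, LinearMap.toMatrix_one, mul_comm t, add_comm (1 : R)]
    · simp [B, LinearMap.toMatrix_one, mul_comm t, hij]

section Normed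

variable {E : Type*} [NormedAddCommGroup E] [NormedSpace ℝ E]

lemma bijective_id_add_of_lipschitzWith [CompleteSpace E] {h : E → E} {K : ℝ≥0}
    (hh : LipschitzWith K h) (hK : K < 1) : Function.Bijective fun x => x + h x := by
  have hid : ApproximatesLinearOn (fun x => x + h x)
      (ContinuousLinearEquiv.refl ℝ E : E →L[ℝ] E) univ K := by
    rw [ApproximatesLinearOn.approximatesLinearOn_iff_lipschitzOnWith, lipschitzOnWith_univ]
    convert hh using 1
    ext x
    simp
  have hK' : Subsingleton E ∨ K < ‖((ContinuousLinearEquiv.refl ℝ E).symm : E →L[ℝ] E)‖₊⁻¹ := by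
    rcases subsingleton_or_nontrivial E with hE | hE
    · exact .inl hE
    · right
      simpa using hK
  exact (hid.toHomeomorph _ hK').bijective

variable [FiniteDimensional ℝ E]

lemma det_one_add_pos_of_norm_lt_one {A : E →L[ℝ] E} (hA : ‖A‖ < 1) : 0 < (1 + A).det := by
  have hcont : Continuous fun t : ℝ => (1 + t • A).det :=
    ContinuousLinearMap.continuous_det.comp (by fun_prop)
  have hne : ∀ t ∈ Icc (0 : ℝ) 1, (1 + t • A).det ≠ 0 := by
    intro t ht
    have htA : ‖t • A‖ < 1 := by
      rw [norm_smul, Real.norm_of_nonneg ht.1]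
      exact (mul_le_of_le_one_left (norm_nonneg A) ht.2).trans_lt hA
    have hunit := (isUnit_one_sub_of_norm_lt_one (x := -(t • A)) (by rwa [norm_neg]))
    rw [sub_neg_eq_add] at hunit
    exact (LinearMap.isUnit_det _
      (hunit.map ContinuousLinearMap.toLinearMapRingHom)).ne_zero
  by_contra! hneg
  obtain ⟨t, ht, hzero⟩ := intermediate_value_Icc' zero_le_one hcont.continuousOn
    (show (0 : ℝ) ∈ Icc _ _ from ⟨by simpa using hneg, by simp [ContinuousLinearMap.det]⟩)
  exact hne t ht hzero

variable [MeasurableSpace E] [BorelSpace E] {μ : Measure E} [μ.IsAddHaarMeasure]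

lemma setIntegral_det_fderiv_mul_comp_id_add {h : E → E} {K : ℝ≥0} {S : Set E}
    (hdiff : Differentiable ℝ h) (hlip : LipschitzWith K h) (hK : K < 1)
    (hS : MeasurableSet S) (hsupp : Function.support h ⊆ S) (φ : E → ℝ) :
    ∫ x in S, (1 + fderiv ℝ h x).det * φ (x + h x) ∂μ = ∫ x in S, φ x ∂μ := by
  have hbij := bijective_id_add_of_lipschitzWith hlip hK
  have himage : (fun x => x + h x) '' S = S := by
    have hfix : EqOn (fun x => x + h x) id Sᶜ := fun x hx => by
      simp [Function.notMem_support.1 (mt (@hsupp x) hx)]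
    rw [← compl_inj_iff, ← image_compl_eq hbij, hfix.image_eq, image_id]
  have hderiv : ∀ x ∈ S, HasFDerivWithinAt (fun x => x + h x) (1 + fderiv ℝ h x) S x :=
    fun x _ => ((hasFDerivAt_id x).add (hdiff x).hasFDerivAt).hasFDerivWithinAt
  have hpos : ∀ x, 0 < (1 + fderiv ℝ h x).det := fun x =>
    det_one_add_pos_of_norm_lt_one ((norm_fderiv_le_of_lipschitz ℝ hlip).trans_lt hK)
  have hchange := integral_image_eq_integral_abs_det_fderiv_smul μ hS hderiv hbij.1.injOn φ
  simpa only [himage, abs_of_pos (hpos _), smul_eq_mul] using hchange.symm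

end Normed

section InnerProduct

variable {E : Type*} [NormedAddCommGroup E] [InnerProductSpace ℝ E]

lemma exists_polynomial_eval_eq_eval_norm_add_smul_sq (p : ℝ[X]) (x v : E) :
    ∃ P : ℝ[X], P.natDegree ≤ p.natDegree * 2 ∧ ∀ t, P.eval t = p.eval (‖x + t • v‖ ^ 2) := by
  refine ⟨p.comp (C (‖v‖ ^ 2) * X ^ 2 + C (2 * inner ℝ x v) * X + C (‖x‖ ^ 2)),
    natDegree_comp_le.trans (Nat.mul_le_mul_left _ natDegree_quadratic_le), fun t => ?_⟩
  simp only [eval_comp, eval_add, eval_mul, eval_pow, eval_C, eval_X, norm_add_sq_real,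
    inner_smul_right, norm_smul, Real.norm_eq_abs, mul_pow, sq_abs]
  ring_nf

variable [FiniteDimensional ℝ E] [MeasurableSpace E] [BorelSpace E] {μ : Measure E}
  [μ.IsAddHaarMeasure] {h : E → E} {S : Set E}

-- Both sides are polynomials in `t` after replacing `h` by `t • h`, and they agree for small `t`.
lemma setIntegral_det_fderiv_mul_eval_norm_sq (hh : ContDiff ℝ 1 h)
    (hS : IsCompact S) (hsupp : Function.support h ⊆ S) (p : ℝ[X]) :
    ∫ x in S, (1 + fderiv ℝ h x).det * p.eval (‖x + h x‖ ^ 2) ∂μ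
      = ∫ x in S, p.eval (‖x‖ ^ 2) ∂μ := by
  have hcont := hh.continuous
  obtain ⟨K, hK⟩ := hh.lipschitzWith_of_hasCompactSupport
    (HasCompactSupport.intro hS fun x hx => Function.notMem_support.1 (mt (@hsupp x) hx))
    one_ne_zero
  let g : ℝ → E → ℝ := fun t x => (1 + t • fderiv ℝ h x).det * p.eval (‖x + t • h x‖ ^ 2)
  have hint : ∀ t, IntegrableOn (g t) S μ := fun t =>
    (Continuous.continuousOn ((ContinuousLinearMap.continuous_det.comp
      (continuous_const.add ((hh.continuous_fderiv one_ne_zero).const_smul t))).mul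
      (p.continuous.comp (by fun_prop)))).integrableOn_compact hS
  have hpoly : ∀ x, ∃ P : ℝ[X], P.natDegree ≤ Module.finrank ℝ E + p.natDegree * 2 ∧
      ∀ t, P.eval t = g t x := by
    intro x
    obtain ⟨P, hPdeg, hP⟩ :=
      exists_polynomial_eval_eq_det_one_add_smul (fderiv ℝ h x : E →ₗ[ℝ] E)
    obtain ⟨Q, hQdeg, hQ⟩ := exists_polynomial_eval_eq_eval_norm_add_smul_sq p x (h x)
    exact ⟨P * Q, natDegree_mul_le.trans (add_le_add hPdeg hQdeg), fun t => by
      rw [eval_mul, hP, hQ]; rfl⟩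
  obtain ⟨P, hP⟩ := exists_polynomial_eval_eq_integral hint hpoly
  have hsmall : ∀ t ∈ Ioo (0 : ℝ) (1 / (K + 1)), P.eval t = ∫ x in S, p.eval (‖x‖ ^ 2) ∂μ := by
    intro t ht
    have htK : ‖t‖₊ * K < 1 := by
      rw [← NNReal.coe_lt_coe, NNReal.coe_mul, coe_nnnorm, Real.norm_of_nonneg ht.1.le]
      have htK' := (lt_div_iff₀ (by positivity)).1 ht.2
      push_cast
      linarith [ht.1]
    have hdiff := hh.differentiable one_ne_zero
    have hidentity := setIntegral_det_fderiv_mul_comp_id_add (μ := μ) (hdiff.const_smul t)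
      ((lipschitzWith_smul t).comp hK) htK hS.measurableSet
      ((Function.support_const_smul_subset t h).trans hsupp) fun x => p.eval (‖x‖ ^ 2)
    simpa only [hP, g, Pi.smul_apply, fderiv_const_smul (hdiff _)] using hidentity
  have hK' : (0 : ℝ) < 1 / (K + 1) := by positivity
  have hconst : P = C (∫ x in S, p.eval (‖x‖ ^ 2) ∂μ) :=
    eq_of_infinite_eval_eq _ _ <| (Ioo_infinite hK').mono fun t ht => by
      simpa using hsmall t ht
  simpa [hconst, g] using (hP 1).symm

lemma setIntegral_det_fderiv_mul_comp_norm_sq (hh : ContDiff ℝ 1 h) (hS : IsCompact S)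
    (hsupp : Function.support h ⊆ S) {β : ℝ → ℝ} (hβ : Continuous β) :
    ∫ x in S, (1 + fderiv ℝ h x).det * β (‖x + h x‖ ^ 2) ∂μ = ∫ x in S, β (‖x‖ ^ 2) ∂μ := by
  have hcont := hh.continuous
  have hJ : Continuous fun x => (1 + fderiv ℝ h x).det :=
    ContinuousLinearMap.continuous_det.comp
      (continuous_const.add (hh.continuous_fderiv one_ne_zero))
  exact setIntegral_mul_comp_eq_setIntegral_comp_of_polynomial hS hJ (by fun_prop)
    (by fun_prop) (setIntegral_det_fderiv_mul_eval_norm_sq hh hS hsupp) hβ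

end InnerProduct

end IntegralIdentity

section Brouwer

open MeasureTheory

variable {E : Type*} [NormedAddCommGroup E]

lemma exists_add_eq_zero_of_contDiff [InnerProductSpace ℝ E] [FiniteDimensional ℝ E]
    {h : E → E} (hh : ContDiff ℝ 1 h)
    (hsupp : HasCompactSupport h) : ∃ x, x + h x = 0 := by
  borelize E
  by_contra! hne
  have hcont := hh.continuous
  obtain ⟨R, hRpos, hR⟩ := hsupp.isBounded.subset_closedBall_lt 0 0
  have hS := isCompact_closedBall (0 : E) R
  obtain ⟨x₀, -, hx₀⟩ := hS.exists_isMinOn (Metric.nonempty_closedBall.2 hRpos.le)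
    (f := fun x => ‖x + h x‖ ^ 2) (by fun_prop)
  have hδ : 0 < ‖x₀ + h x₀‖ ^ 2 := by have := norm_pos_iff.2 (hne x₀); positivity
  let β : ℝ → ℝ := fun s => max 0 (‖x₀ + h x₀‖ ^ 2 - s)
  have hβ : Continuous β := by fun_prop
  have hidentity := setIntegral_det_fderiv_mul_comp_norm_sq (μ := Measure.addHaar) hh hS
    ((subset_tsupport h).trans hR) hβ
  have hzero : ∫ x in Metric.closedBall 0 R, (1 + fderiv ℝ h x).det * β (‖x + h x‖ ^ 2)
      ∂Measure.addHaar = 0 :=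
    setIntegral_eq_zero_of_forall_eq_zero fun x hx => by
      rw [show β (‖x + h x‖ ^ 2) = 0 from max_eq_left (sub_nonpos.2 (hx₀ hx)), mul_zero]
  have hβint := ((hβ.comp (continuous_norm.pow 2)).continuousOn
    (s := Metric.closedBall (0 : E) R)).integrableOn_compact (μ := Measure.addHaar) hS
  have hpos : 0 < ∫ x in Metric.closedBall (0 : E) R, β (‖x‖ ^ 2) ∂Measure.addHaar := by
    refine (setIntegral_pos_iff_support_of_nonneg_ae
      (Filter.Eventually.of_forall fun x => le_max_left _ _) hβint).2 ?_
    have hopen : IsOpen ({x : E | ‖x‖ ^ 2 < ‖x₀ + h x₀‖ ^ 2} ∩ Metric.ball 0 R) :=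
      (isOpen_lt (by fun_prop) continuous_const).inter Metric.isOpen_ball
    refine (hopen.measure_pos _ ⟨0, by simpa using hδ, by simpa using hRpos⟩).trans_le
      (measure_mono (inter_subset_inter (fun x hx => ?_) Metric.ball_subset_closedBall))
    exact (lt_max_of_lt_right (sub_pos.2 hx)).ne'
  exact hpos.ne' (hidentity.symm.trans hzero)

lemma exists_add_eq_zero_of_hasCompactSupport [InnerProductSpace ℝ E]
    [FiniteDimensional ℝ E] {k : E → E} (hk : Continuous k)
    (hsupp : HasCompactSupport k) : ∃ x, x + k x = 0 := by
  have hcoercive : Filter.Tendsto (fun x => ‖x + k x‖) (Filter.cocompact E) Filter.atTop := by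
    refine (tendsto_norm_cocompact_atTop (E := E)).congr' ?_
    rw [← Filter.coclosedCompact_eq_cocompact]
    exact (hasCompactSupport_iff_eventuallyEq.1 hsupp).mono fun x hx => by simp [hx]
  obtain ⟨x₀, hx₀⟩ := Continuous.exists_forall_le (by fun_prop) hcoercive
  refine ⟨x₀, norm_le_zero_iff.1 (le_of_not_gt fun hpos => ?_)⟩
  obtain ⟨g, hg, hgk, hgsupp⟩ := hk.exists_contDiff_approx 1 continuous_const fun _ => hpos
  obtain ⟨x, hx⟩ := exists_add_eq_zero_of_contDiff hg (hsupp.mono hgsupp)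
  have hdist : dist (g x) (k x) = ‖x + k x‖ := by
    rw [dist_comm, dist_eq_norm, sub_eq_neg_add, ← eq_neg_of_add_eq_zero_left hx]
  exact (hx₀ x).not_gt (hdist ▸ hgk x)

lemma exists_isFixedPt_of_isBounded_range [NormedSpace ℝ E] [FiniteDimensional ℝ E] {G : E → E}
    (hG : Continuous G) (hbdd : Bornology.IsBounded (range G)) : ∃ x, Function.IsFixedPt G x := by
  have : ProperSpace E := FiniteDimensional.proper_real E
  obtain ⟨M, hM⟩ := hbdd.subset_closedBall 0
  obtain ⟨ψ, hψone, -, hψsupp, hψ⟩ := exists_continuous_one_zero_of_isCompact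
    (isCompact_closedBall (0 : E) M) isClosed_empty (disjoint_empty _)
  let k : E → E := fun x => -(ψ x • G x)
  have hk : HasCompactSupport k := hψsupp.mono fun x hx hzero => hx (by simp [k, hzero])
  let e := toEuclidean (E := E)
  obtain ⟨y, hy⟩ := exists_add_eq_zero_of_hasCompactSupport (k := e ∘ k ∘ e.symm) (by fun_prop)
    ((hk.comp_homeomorph e.symm.toHomeomorph).comp_left e.map_zero)
  have hx : e.symm y = ψ (e.symm y) • G (e.symm y) := by
    have h := congrArg e.symm hy
    simpa [k, add_neg_eq_zero] using h
  have hnorm : ‖e.symm y‖ ≤ M := by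
    rw [hx, norm_smul, Real.norm_of_nonneg (hψ _).1]
    exact (mul_le_of_le_one_left (norm_nonneg _) (hψ _).2).trans
      (mem_closedBall_zero_iff.1 (hM (mem_range_self _)))
  rw [hψone (mem_closedBall_zero_iff.2 hnorm), Pi.one_apply, one_smul] at hx
  exact ⟨e.symm y, hx.symm⟩

end Brouwer

section Continuation

lemma map_mem_connectedComponentIn {X Y : Type*} [TopologicalSpace X] [TopologicalSpace Y]
    {g : X → Y} {S : Set X} {T : Set Y} {x y : X} (hg : ContinuousOn g S) (hST : MapsTo g S T)
    (hx : x ∈ S) (hy : y ∈ connectedComponentIn S x) : g y ∈ connectedComponentIn T (g x) :=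
  connectedComponentIn_mono _ hST.image_subset (hg.mapsTo_connectedComponentIn hx hy)

lemma exists_isClopen_disjoint_of_connectedComponent_disjoint {X : Type*} [TopologicalSpace X]
    [T2Space X] [CompactSpace X] {x : X} {T : Set X} (hT : IsClosed T)
    (hdisj : Disjoint (connectedComponent x) T) : ∃ U, IsClopen U ∧ x ∈ U ∧ Disjoint U T := by
  have : Nonempty {U : Set X // IsClopen U ∧ x ∈ U} := ⟨univ, isClopen_univ, mem_univ x⟩
  have hsub : ⋂ U : {U : Set X // IsClopen U ∧ x ∈ U}, U.1 ⊆ Tᶜ := by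
    rw [← connectedComponent_eq_iInter_isClopen]
    exact hdisj.subset_compl_right
  obtain ⟨⟨U, hU, hxU⟩, hUT⟩ := exists_subset_nhds_of_compactSpace
    (V := fun U : {U : Set X // IsClopen U ∧ x ∈ U} => U.1)
    (fun U V => ⟨⟨U ∩ V, U.2.1.inter V.2.1, U.2.2, V.2.2⟩, inter_subset_left, inter_subset_right⟩)
    (fun U => U.2.1.isClosed) (fun y hy => hT.isOpen_compl.mem_nhds (hsub hy))
  exact ⟨U, hU, hxU, disjoint_left.2 hUT⟩

lemma exists_continuous_separating_connectedComponentIn {X : Type*} [TopologicalSpace X]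
    [T2Space X] [NormalSpace X] {Z T : Set X} {x : X} (hZ : IsCompact Z) (hx : x ∈ Z)
    (hT : IsClosed T) (hdisj : Disjoint (connectedComponentIn Z x) T) :
    ∃ τ : C(X, ℝ), τ x = 1 ∧ EqOn τ 0 (Z ∩ T) ∧ (∀ z ∈ Z, τ z = 0 ∨ τ z = 1) ∧
      ∀ z, τ z ∈ Icc (0 : ℝ) 1 := by
  have := isCompact_iff_compactSpace.1 hZ
  rw [connectedComponentIn_eq_image hx, disjoint_image_left] at hdisj
  obtain ⟨U, hU, hxU, hUT⟩ := exists_isClopen_disjoint_of_connectedComponent_disjoint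
    (hT.preimage continuous_subtype_val) hdisj
  have hclosed : ∀ {W : Set Z}, IsClosed W → IsClosed ((↑) '' W : Set X) := fun hW =>
    (hW.isCompact.image continuous_subtype_val).isClosed
  obtain ⟨τ, hzero, hone, hτ⟩ := exists_continuous_zero_one_of_isClosed
    (hclosed hU.compl.isClosed) (hclosed hU.isClosed)
    (disjoint_image_iff Subtype.val_injective |>.2 disjoint_compl_left)
  refine ⟨τ, hone (mem_image_of_mem _ hxU), fun z hz => ?_, fun z hz => ?_, hτ⟩
  · exact hzero ⟨⟨z, hz.1⟩, fun hzU => disjoint_left.1 hUT hzU hz.2, rfl⟩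
  · by_cases hzU : (⟨z, hz⟩ : Z) ∈ U
    · exact .inr (hone ⟨_, hzU, rfl⟩)
    · exact .inl (hzero ⟨_, hzU, rfl⟩)

-- A continuous `τ` that is `1` on the component of `(0, u₀)` and `0` at the fixed points over `1`
-- would leave `(s, u) ↦ (τ (s, u), F (s, u))` without a fixed point.
open unitInterval in
lemma exists_mem_connectedComponentIn_fixedPoints {E : Type*} [NormedAddCommGroup E]
    [NormedSpace ℝ E] [FiniteDimensional ℝ E] {F : I × E → E} (hF : Continuous F)
    (hbdd : Bornology.IsBounded (range F)) {u₀ : E} (hF₀ : ∀ u, F (0, u) = u₀) :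
    ∃ u, (1, u) ∈ connectedComponentIn {p : I × E | F p = p.2} (0, u₀) := by
  by_contra! hnot
  have hcompact : IsCompact {p : I × E | F p = p.2} := by
    have : ProperSpace E := FiniteDimensional.proper_real E
    refine (isCompact_univ.prod hbdd.isCompact_closure).of_isClosed_subset
      (isClosed_eq hF continuous_snd) fun p hp => ⟨mem_univ _, subset_closure ⟨p, hp⟩⟩
  obtain ⟨τ, hτone, hτzero, hτZ, hτ⟩ := exists_continuous_separating_connectedComponentIn
    (T := {p : I × E | p.1 = 1}) hcompact (hF₀ u₀) (isClosed_eq continuous_fst continuous_const)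
    (disjoint_left.2 fun p hp hp₁ => hnot p.2 (by rwa [← show p.1 = 1 from hp₁]))
  let proj : ℝ × E → I × E := fun p => (projIcc 0 1 zero_le_one p.1, p.2)
  have hproj : Continuous proj := by fun_prop
  obtain ⟨⟨s, u⟩, hfix⟩ := exists_isFixedPt_of_isBounded_range
    (G := fun p => (τ (proj p), F (proj p))) (by fun_prop)
    (((Metric.isBounded_Icc 0 1).prod hbdd).subset <| range_subset_iff.2 fun p =>
      ⟨hτ _, mem_range_self _⟩)
  obtain ⟨hs, hu⟩ : τ (proj (s, u)) = s ∧ F (proj (s, u)) = u := Prod.ext_iff.1 hfix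
  have hsI : s ∈ I := hs ▸ hτ _
  have hprojsu : proj (s, u) = (⟨s, hsI⟩, u) := Prod.ext (projIcc_of_mem zero_le_one hsI) rfl
  rw [hprojsu] at hs hu
  rcases hτZ _ hu with h | h
  · obtain rfl : s = 0 := hs.symm.trans h
    obtain rfl : u = u₀ := hu.symm.trans (hF₀ u)
    exact zero_ne_one (h.symm.trans hτone)
  · obtain rfl : s = 1 := hs.symm.trans h
    exact one_ne_zero (h.symm.trans (hτzero ⟨hu, rfl⟩))

-- Normalising `N` to the sphere of radius `s * M` turns the eigenpairs into fixed points of a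
-- bounded homotopy in `s ∈ [0, 1]` that starts from a constant map.
lemma exists_norm_eq_mem_connectedComponentIn_eigenpairs {ι : Type*} [Fintype ι]
    {N : (ι → ℝ) → ι → ℝ} (hN : ContinuousOn N (Ici 0)) (hpos : ∀ u, 0 ≤ u → 0 < N u)
    {M : ℝ} (hM : 0 ≤ M) :
    ∃ p ∈ connectedComponentIn
      {p : ℝ × (ι → ℝ) | 0 ≤ p.1 ∧ 0 ≤ p.2 ∧ p.2 = p.1 • N p.2} (0, 0), ‖p.2‖ = M := by
  let N' : (ι → ℝ) → ι → ℝ := fun u => N fun i => max (u i) 0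
  have hN' : Continuous N' := hN.comp_continuous (by fun_prop) fun u i => le_max_right _ _
  have hN'pos : ∀ u, 0 < N' u := fun u => hpos _ fun i => le_max_right _ _
  have hN'eq : ∀ {u}, 0 ≤ u → N' u = N u := fun hu =>
    congrArg N (funext fun i => max_eq_left (hu i))
  have hnorm : ∀ u, 0 < ‖N' u‖ := fun u => norm_pos_iff.2 (hN'pos u).ne'
  let lam : unitInterval × (ι → ℝ) → ℝ := fun p => p.1 * M / ‖N' p.2‖
  have hlam : Continuous lam := by
    refine Continuous.div (by fun_prop) (by fun_prop) fun p => (hnorm p.2).ne'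
  have hlam_nonneg : ∀ p, 0 ≤ lam p := fun p =>
    div_nonneg (mul_nonneg p.1.2.1 hM) (norm_nonneg _)
  let F : unitInterval × (ι → ℝ) → ι → ℝ := fun p => lam p • N' p.2
  have hFnorm : ∀ p, ‖F p‖ = p.1 * M := fun p => by
    rw [norm_smul, Real.norm_of_nonneg (hlam_nonneg p), div_mul_cancel₀ _ (hnorm p.2).ne']
  have hFbdd : Bornology.IsBounded (range F) :=
    (Metric.isBounded_closedBall (x := 0) (r := M)).subset <| range_subset_iff.2 fun p => by
      rw [mem_closedBall_zero_iff, hFnorm]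
      exact mul_le_of_le_one_left hM p.1.2.2
  obtain ⟨u, hu⟩ := exists_mem_connectedComponentIn_fixedPoints (F := F) (by fun_prop) hFbdd
    (u₀ := 0) fun u => by simp [F, lam]
  have hfix : F (1, u) = u := by simpa using connectedComponentIn_subset _ _ hu
  have hmaps : MapsTo (fun p => (lam p, p.2)) {p | F p = p.2}
      {p : ℝ × (ι → ℝ) | 0 ≤ p.1 ∧ 0 ≤ p.2 ∧ p.2 = p.1 • N p.2} := fun p hp => by
    have hp₀ : 0 ≤ p.2 := hp ▸ smul_nonneg (hlam_nonneg p) (hN'pos p.2).le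
    exact ⟨hlam_nonneg p, hp₀, hN'eq hp₀ ▸ hp.symm⟩
  have hmem := map_mem_connectedComponentIn (x := ((0 : unitInterval), (0 : ι → ℝ)))
    (by fun_prop) hmaps (by simp [F, lam]) hu
  refine ⟨(lam (1, u), u), by simpa [lam] using hmem, ?_⟩
  simpa [hfix] using hFnorm (1, u)

end Continuation

lemma mul_le_of_convexOn_of_hasDerivWithinAt {S : Set ℝ} {g : ℝ → ℝ} {c a : ℝ}
    (hg : ConvexOn ℝ S g) (ha : a ∈ S) (hderiv : HasDerivWithinAt g c S a) (htangent : g a = a * c)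
    {s : ℝ} (hs : s ∈ S) : c * s ≤ g s := by
  rcases lt_trichotomy s a with hsa | rfl | has
  · have h := hg.slope_le_of_hasDerivWithinAt hs ha hsa hderiv
    rw [slope_def_field, div_le_iff₀ (sub_pos.2 hsa)] at h
    linarith
  · exact (htangent.trans (mul_comm _ _)).ge
  · have h := hg.le_slope_of_hasDerivWithinAt ha hs has hderiv
    rw [slope_def_field, le_div_iff₀ (sub_pos.2 has)] at h
    linarith

section GraphLaplacian

variable {V : Type*} {w : V → V → ℝ} {u : V → ℝ} {x : V}

/-- The mean `∫ u dm_x = (1/d_x) Σ_y w_{xy} u(y)` of `u` under one step of the random walk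
started at `x`. -/
noncomputable def avgG (w : V → V → ℝ) (u : V → ℝ) (x : V) : ℝ :=
  (∑' y, w x y * u y) / degG w x

lemma summable_of_degG_pos (hx : 0 < degG w x) : Summable (w x) := by
  by_contra h
  exact hx.ne' (tsum_eq_zero_of_not_summable h)

lemma neg_lapG_eq_sub_avgG (hx : 0 < degG w x) (hu : Summable fun y => w x y * u y) :
    -(lapG w u x) = u x - avgG w u x := by
  have htsum : ∑' y, w x y * (u y - u x) = ∑' y, w x y * u y - degG w x * u x := by
    simp_rw [mul_sub, degG, ← tsum_mul_right]
    exact hu.tsum_sub ((summable_of_degG_pos hx).mul_right _)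
  rw [lapG, avgG, htsum, sub_div, mul_div_cancel_left₀ _ hx.ne', neg_sub]

lemma le_avgG {m : ℝ} (hnn : ∀ y, 0 ≤ w x y) (hx : 0 < degG w x)
    (hu : Summable fun y => w x y * u y) (hm : ∀ y, m ≤ u y) : m ≤ avgG w u x := by
  rw [avgG, le_div_iff₀' hx, degG, ← tsum_mul_right]
  exact ((summable_of_degG_pos hx).mul_right m).tsum_le_tsum
    (fun y => mul_le_mul_of_nonneg_left (hm y) (hnn y)) hu

lemma lt_avgG {m : ℝ} (hnn : ∀ y, 0 ≤ w x y) (hx : 0 < degG w x)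
    (hu : Summable fun y => w x y * u y) (hm : ∀ y, m ≤ u y) {y : V} (hxy : 0 < w x y)
    (hy : m < u y) : m < avgG w u x := by
  rw [avgG, lt_div_iff₀' hx, degG, ← tsum_mul_right]
  exact Summable.tsum_lt_tsum (fun z => mul_le_mul_of_nonneg_left (hm z) (hnn z))
    (mul_lt_mul_of_pos_left hy hxy) ((summable_of_degG_pos hx).mul_right m) hu

variable {Ω : Set V}

lemma summable_mul_of_eq_zero_off_finite (hΩ : Ω.Finite) (hu : ∀ y ∉ Ω, u y = 0) :
    Summable fun y => w x y * u y :=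
  summable_of_hasFiniteSupport <| hΩ.subset fun y hy => by
    by_contra hyΩ
    exact hy (by simp [hu y hyΩ])

lemma nonneg_of_neg_lapG_nonneg (hsym : ∀ x y, w x y = w y x) (hnn : ∀ x y, 0 ≤ w x y)
    (hdeg : ∀ x, 0 < degG w x) (hΩ : Ω.Finite) (hbdry : (bdryG w Ω).Nonempty)
    (hconn : connG w Ω) (hu₀ : ∀ x ∉ Ω, u x = 0) (hu : ∀ x ∈ Ω, 0 ≤ -(lapG w u x)) (x : V) :
    0 ≤ u x := by
  obtain ⟨z, hzΩ, b, hbΩ, hzb⟩ := hbdry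
  obtain ⟨a, haΩ, hmin⟩ := exists_min_image Ω u hΩ ⟨b, hbΩ⟩
  by_contra! hx
  have ha : u a < 0 := (hmin x (by_contra fun hxΩ => hx.ne (hu₀ x hxΩ))).trans_lt hx
  have hglobal : ∀ y, u a ≤ u y := fun y => by
    by_cases hy : y ∈ Ω
    · exact hmin y hy
    · exact (hu₀ y hy).symm ▸ ha.le
  have hspread : ∀ p ∈ Ω, u p = u a → ∀ q, 0 < w p q → u q = u a := by
    intro p hp hpa q hpq
    by_contra! hqa
    have hsum := summable_mul_of_eq_zero_off_finite (w := w) (x := p) hΩ hu₀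
    have hlt := lt_avgG (hnn p) (hdeg p) hsum hglobal hpq ((hglobal q).lt_of_ne' hqa)
    have hle := hu p hp
    rw [neg_lapG_eq_sub_avgG (hdeg p) hsum] at hle
    linarith
  have hconst : u b = u a := by
    by_contra! hba
    obtain ⟨p, hp, q, hq, hpq⟩ := hconn {p ∈ Ω | u p = u a} {p ∈ Ω | u p ≠ u a} ⟨a, haΩ, rfl⟩
      ⟨b, hbΩ, hba⟩ (sep_subset _ _) (sep_subset _ _) (by ext p; simp; tauto)
    exact hq.2 (hspread p hp.1 hp.2 q hpq)
  exact ha.ne ((hspread b hbΩ hconst z (hsym z b ▸ hzb)).symm.trans (hu₀ z hzΩ))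

end GraphLaplacian

section DirichletProblem

open scoped Matrix

variable {V : Type*} {w : V → V → ℝ} {Ω : Set V}

/-- Extension by zero of a function on `Ω` to all vertices: the Dirichlet boundary condition. -/
noncomputable def zeroExt (Ω : Set V) : (Ω → ℝ) →ₗ[ℝ] V → ℝ :=
  Function.ExtendByZero.linearMap ℝ (↑)

lemma zeroExt_coe (u : Ω → ℝ) (x : Ω) : zeroExt Ω u x = u x :=
  Subtype.val_injective.extend_apply _ _ x

lemma zeroExt_of_notMem (u : Ω → ℝ) {x : V} (hx : x ∉ Ω) : zeroExt Ω u x = 0 :=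
  Function.extend_apply' _ _ x fun ⟨y, hy⟩ => hx (hy ▸ y.2)

lemma zeroExt_nonneg_iff {u : Ω → ℝ} : (∀ x, 0 ≤ zeroExt Ω u x) ↔ 0 ≤ u := by
  refine ⟨fun h x => zeroExt_coe u x ▸ h x, fun h x => ?_⟩
  by_cases hx : x ∈ Ω
  · exact (h ⟨x, hx⟩).trans_eq (zeroExt_coe u ⟨x, hx⟩).symm
  · exact (zeroExt_of_notMem u hx).ge

variable [Fintype Ω]

lemma iSup_closG_abs_zeroExt (u : Ω → ℝ) : ⨆ x ∈ closG w Ω, |zeroExt Ω u x| = ‖u‖ := by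
  have hle : ∀ x, ⨆ _ : x ∈ closG w Ω, |zeroExt Ω u x| ≤ ‖u‖ := by
    refine fun x => Real.iSup_le (fun _ => ?_) (norm_nonneg u)
    by_cases hx : x ∈ Ω
    · exact (zeroExt_coe u ⟨x, hx⟩).symm ▸ norm_le_pi_norm u ⟨x, hx⟩
    · rw [zeroExt_of_notMem u hx, abs_zero]
      exact norm_nonneg u
  refine (Real.iSup_le hle (norm_nonneg u)).antisymm ?_
  refine (pi_norm_le_iff_of_nonneg (Real.iSup_nonneg fun x => Real.iSup_nonneg fun _ =>
    abs_nonneg _)).2 fun x => ?_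
  refine le_ciSup_of_le ⟨‖u‖, forall_mem_range.2 hle⟩ (x : V) ?_
  have hx : (x : V) ∈ closG w Ω := subset_union_left x.2
  rw [ciSup_pos hx, zeroExt_coe, Real.norm_eq_abs]

variable [DecidableEq Ω]

/-- The matrix of `−Δ_{m^G}` on functions on `Ω` extended by zero. -/
noncomputable def dirichletMatrix (w : V → V → ℝ) (Ω : Set V) [DecidableEq Ω] : Matrix Ω Ω ℝ :=
  1 - Matrix.of fun x y : Ω => w x y / degG w x

lemma dirichletMatrix_mulVec (hdeg : ∀ x, 0 < degG w x) (u : Ω → ℝ) (x : Ω) :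
    (dirichletMatrix w Ω *ᵥ u) x = -(lapG w (zeroExt Ω u) x) := by
  have htsum : ∑' y, w x y * zeroExt Ω u y = ∑ y : Ω, w x y * u y := by
    rw [← tsum_subtype_eq_of_support_subset (s := Ω) fun y hy => by_contra fun hyΩ =>
      hy (by simp [zeroExt_of_notMem u hyΩ])]
    simp_rw [zeroExt_coe, tsum_fintype]
  rw [neg_lapG_eq_sub_avgG (hdeg x)
    (summable_mul_of_eq_zero_off_finite Ω.toFinite fun y => zeroExt_of_notMem u), avgG, htsum,
    zeroExt_coe, dirichletMatrix, Matrix.sub_mulVec, Matrix.one_mulVec, Pi.sub_apply,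
    Matrix.mulVec, dotProduct, Finset.sum_div]
  simp_rw [Matrix.of_apply, div_mul_eq_mul_div]

lemma nonneg_of_dirichletMatrix_mulVec_nonneg (hsym : ∀ x y, w x y = w y x)
    (hnn : ∀ x y, 0 ≤ w x y) (hdeg : ∀ x, 0 < degG w x) (hbdry : (bdryG w Ω).Nonempty)
    (hconn : connG w Ω) {u : Ω → ℝ} (hu : 0 ≤ dirichletMatrix w Ω *ᵥ u) : 0 ≤ u :=
  zeroExt_nonneg_iff.1 <| nonneg_of_neg_lapG_nonneg hsym hnn hdeg Ω.toFinite hbdry hconn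
    (fun _ => zeroExt_of_notMem u) fun x hx => dirichletMatrix_mulVec hdeg u ⟨x, hx⟩ ▸ hu ⟨x, hx⟩

lemma isUnit_dirichletMatrix (hsym : ∀ x y, w x y = w y x) (hnn : ∀ x y, 0 ≤ w x y)
    (hdeg : ∀ x, 0 < degG w x) (hbdry : (bdryG w Ω).Nonempty) (hconn : connG w Ω) :
    IsUnit (dirichletMatrix w Ω) := by
  have hnonneg := @nonneg_of_dirichletMatrix_mulVec_nonneg _ w Ω _ _ hsym hnn hdeg hbdry hconn
  rw [← Matrix.mulVec_injective_iff_isUnit, ← Matrix.coe_mulVecLin, ← LinearMap.ker_eq_bot,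
    LinearMap.ker_eq_bot']
  intro u hu
  rw [Matrix.mulVecLin_apply] at hu
  refine le_antisymm (neg_nonneg.1 (hnonneg ?_)) (hnonneg hu.ge)
  rw [Matrix.mulVec_neg, hu, neg_zero]

end DirichletProblem

section Gelfand

open scoped Matrix

variable {V : Type*} {w : V → V → ℝ} {Ω : Set V} {f : ℝ → ℝ} {lam : ℝ} {u : V → ℝ}

lemma IsSolG.eq_add_avgG {x : V} (h : IsSolG w Ω lam f u) (hdeg : ∀ x, 0 < degG w x)
    (hΩ : Ω.Finite) (hx : x ∈ Ω) : u x = lam * f (u x) + avgG w u x := by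
  have heq := h.2.2 x hx
  rw [neg_lapG_eq_sub_avgG (hdeg x) (summable_mul_of_eq_zero_off_finite hΩ h.1)] at heq
  exact sub_eq_iff_eq_add.1 heq

lemma IsSolG.mul_le {x : V} (h : IsSolG w Ω lam f u) (hnn : ∀ x y, 0 ≤ w x y)
    (hdeg : ∀ x, 0 < degG w x) (hΩ : Ω.Finite) (hx : x ∈ Ω) : lam * f (u x) ≤ u x := by
  have havg := le_avgG (hnn x) (hdeg x) (summable_mul_of_eq_zero_off_finite hΩ h.1) h.2.1
  linarith [h.eq_add_avgG hdeg hΩ hx]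

lemma IsSolG.mul_lt {x : V} (h : IsSolG w Ω lam f u) (hnn : ∀ x y, 0 ≤ w x y)
    (hdeg : ∀ x, 0 < degG w x) (hΩ : Ω.Finite) (hconn : connG w Ω)
    (hf : ∀ s, 0 ≤ s → 0 < f s) (hlam : 0 < lam) (hx : x ∈ Ω) : lam * f (u x) < u x := by
  obtain ⟨_, rfl, y, hy, hxy⟩ := hconn {x} Ω (singleton_nonempty x) ⟨x, hx⟩
    (singleton_subset_iff.2 hx) Subset.rfl (union_eq_right.2 (singleton_subset_iff.2 hx))
  have hypos : 0 < u y := (mul_pos hlam (hf _ (h.2.1 y))).trans_le (h.mul_le hnn hdeg hΩ hy)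
  have havg := lt_avgG (hnn _) (hdeg _) (summable_mul_of_eq_zero_off_finite hΩ h.1) h.2.1 hxy hypos
  linarith [h.eq_add_avgG hdeg hΩ hx]

lemma IsSolG.le_inv {c : ℝ} (h : IsSolG w Ω lam f u) (hnn : ∀ x y, 0 ≤ w x y)
    (hdeg : ∀ x, 0 < degG w x) (hΩ : Ω.Finite) (hne : Ω.Nonempty)
    (hf : ∀ s, 0 ≤ s → 0 < f s) (hc : 0 < c) (hcf : ∀ s, 0 ≤ s → c * s ≤ f s) : lam ≤ c⁻¹ := by
  obtain ⟨x, hx⟩ := hne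
  refine le_of_mul_le_mul_right ((h.mul_le hnn hdeg hΩ hx).trans ?_) (hf _ (h.2.1 x))
  exact (le_inv_mul_iff₀ hc).2 (hcf _ (h.2.1 x))

lemma isSolG_zeroExt [Fintype Ω] [DecidableEq Ω] (hdeg : ∀ x, 0 < degG w x)
    {u : Ω → ℝ} (hu : 0 ≤ u) (heq : dirichletMatrix w Ω *ᵥ u = lam • fun x => f (u x)) :
    IsSolG w Ω lam f (zeroExt Ω u) := by
  refine ⟨fun x => zeroExt_of_notMem u, zeroExt_nonneg_iff.2 hu, fun x hx => ?_⟩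
  rw [← dirichletMatrix_mulVec hdeg u ⟨x, hx⟩, heq, zeroExt_coe u ⟨x, hx⟩]
  rfl

lemma exists_isSolG_zeroExt_mem_connectedComponentIn [Fintype Ω] (hsym : ∀ x y, w x y = w y x)
    (hnn : ∀ x y, 0 ≤ w x y) (hdeg : ∀ x, 0 < degG w x) (hbdry : (bdryG w Ω).Nonempty)
    (hconn : connG w Ω) (hf : ContinuousOn f (Ici 0)) (hfpos : ∀ s, 0 ≤ s → 0 < f s)
    {M : ℝ} (hM : 0 < M) :
    ∃ lam > 0, ∃ u : Ω → ℝ, ‖u‖ = M ∧ (lam, zeroExt Ω u) ∈ connectedComponentIn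
      {p : ℝ × (V → ℝ) | 0 ≤ p.1 ∧ IsSolG w Ω p.1 f p.2} (0, 0) := by
  classical
  let D := dirichletMatrix w Ω
  have hD : D * D⁻¹ = 1 := Matrix.mul_nonsing_inv _ <| (Matrix.isUnit_iff_isUnit_det _).1 <|
    isUnit_dirichletMatrix hsym hnn hdeg hbdry hconn
  let N : (Ω → ℝ) → Ω → ℝ := fun u => D⁻¹ *ᵥ fun x => f (u x)
  have hDN : ∀ u, D *ᵥ N u = fun x => f (u x) := fun u => by
    rw [Matrix.mulVec_mulVec, hD, Matrix.one_mulVec]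
  have hN : ContinuousOn N (Ici 0) := by
    refine (continuous_const.matrix_mulVec continuous_id).comp_continuousOn
      (continuousOn_pi.2 fun x => ?_)
    exact hf.comp (continuous_apply x).continuousOn fun u hu => hu x
  have hNpos : ∀ u, 0 ≤ u → 0 < N u := by
    intro u hu
    have hnonneg : 0 ≤ N u := nonneg_of_dirichletMatrix_mulVec_nonneg hsym hnn hdeg hbdry hconn
      ((hDN u).symm ▸ fun x => (hfpos _ (hu x)).le)
    refine hnonneg.lt_of_ne' fun hzero => ?_
    obtain ⟨-, -, x, hx, -⟩ := hbdry
    have hfx := congrFun (hDN u) ⟨x, hx⟩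
    rw [hzero, Matrix.mulVec_zero] at hfx
    exact (hfpos _ (hu ⟨x, hx⟩)).ne hfx
  obtain ⟨⟨lam, u⟩, hmem, hnorm⟩ := exists_norm_eq_mem_connectedComponentIn_eigenpairs hN hNpos
    hM.le
  obtain ⟨hlam, -, heigen⟩ := connectedComponentIn_subset _ _ hmem
  have hlam_ne : lam ≠ 0 := by
    rintro rfl
    rw [show u = 0 by simpa using heigen, norm_zero] at hnorm
    exact hM.ne hnorm
  refine ⟨lam, hlam.lt_of_ne' hlam_ne, u, hnorm, ?_⟩
  have hmaps : MapsTo (fun p : ℝ × (Ω → ℝ) => (p.1, zeroExt Ω p.2))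
      {p | 0 ≤ p.1 ∧ 0 ≤ p.2 ∧ p.2 = p.1 • N p.2}
      {p : ℝ × (V → ℝ) | 0 ≤ p.1 ∧ IsSolG w Ω p.1 f p.2} := fun p ⟨hlam, hu, heq⟩ =>
    ⟨hlam, isSolG_zeroExt hdeg hu (by rw [← hDN, ← Matrix.mulVec_smul, ← heq])⟩
  have hcont := (zeroExt Ω).continuous_of_finiteDimensional
  simpa using map_mem_connectedComponentIn (by fun_prop) hmaps (by simp) hmem

lemma inv_mem_upperBounds_setOf_isSolG {c : ℝ} (hnn : ∀ x y, 0 ≤ w x y)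
    (hdeg : ∀ x, 0 < degG w x) (hΩ : Ω.Finite) (hne : Ω.Nonempty) (hf : ∀ s, 0 ≤ s → 0 < f s)
    (hc : 0 < c) (hcf : ∀ s, 0 ≤ s → c * s ≤ f s) :
    c⁻¹ ∈ upperBounds {lam | 0 ≤ lam ∧ ∃ u, IsSolG w Ω lam f u} :=
  fun _ ⟨_, _, h⟩ => h.le_inv hnn hdeg hΩ hne hf hc hcf

lemma lamStarG_le_inv {c : ℝ} (hnn : ∀ x y, 0 ≤ w x y) (hdeg : ∀ x, 0 < degG w x)
    (hΩ : Ω.Finite) (hne : Ω.Nonempty) (hf : ∀ s, 0 ≤ s → 0 < f s) (hc : 0 < c)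
    (hcf : ∀ s, 0 ≤ s → c * s ≤ f s) : lamStarG w Ω f ≤ c⁻¹ :=
  Real.sSup_le (inv_mem_upperBounds_setOf_isSolG hnn hdeg hΩ hne hf hc hcf) (inv_nonneg.2 hc.le)

theorem graph_continuum_branch_general (hsym : ∀ x y, w x y = w y x) (hnn : ∀ x y, 0 ≤ w x y)
    (hdeg : ∀ x, 0 < degG w x) (hΩ : Ω.Finite) (hbdry : (bdryG w Ω).Nonempty)
    (hconn : connG w Ω) (hf : ContinuousOn f (Ici 0)) (hfpos : ∀ s, 0 ≤ s → 0 < f s)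
    {c : ℝ} (hc : 0 < c) (hcf : ∀ s, 0 ≤ s → c * s ≤ f s) {M : ℝ} (hM : 0 < M) :
    ∃ lam : ℝ, ∃ usol : V → ℝ, 0 < lam ∧ lam < M / f M ∧ IsSolG w Ω lam f usol ∧
      (⨆ x ∈ closG w Ω, |usol x|) = M ∧
      (lam, usol) ∈ connectedComponentIn
        {p : ℝ × (V → ℝ) | p.1 ∈ Icc 0 (lamStarG w Ω f) ∧ IsSolG w Ω p.1 f p.2} (0, 0) := by
  classical
  have : Fintype Ω := hΩ.fintype
  have hne : Ω.Nonempty := let ⟨_, _, y, hy, _⟩ := hbdry; ⟨y, hy⟩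
  have : Nonempty Ω := hne.to_subtype
  obtain ⟨lam, hlam, u, hnorm, hmem⟩ := exists_isSolG_zeroExt_mem_connectedComponentIn hsym hnn
    hdeg hbdry hconn hf hfpos hM
  have hsol : IsSolG w Ω lam f (zeroExt Ω u) := (connectedComponentIn_subset _ _ hmem).2
  obtain ⟨x, hx⟩ : ∃ x, ‖u x‖ = ‖u‖ := (IsGreatest.pi_norm u).1
  have hxM : zeroExt Ω u x = M := by
    rw [← hnorm, ← hx, ← zeroExt_coe u x, Real.norm_of_nonneg (hsol.2.1 x)]
  refine ⟨lam, zeroExt Ω u, hlam, ?_, hsol, by rw [iSup_closG_abs_zeroExt, hnorm],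
    connectedComponentIn_mono _ ?_ hmem⟩
  · rw [lt_div_iff₀ (hfpos M hM.le), ← hxM]
    exact hsol.mul_lt hnn hdeg hΩ hconn hfpos hlam x.2
  · exact fun p hp => ⟨⟨hp.1, le_csSup ⟨c⁻¹, inv_mem_upperBounds_setOf_isSolG hnn hdeg hΩ hne
      hfpos hc hcf⟩ ⟨hp.1, p.2, hp.2⟩⟩, hp.2⟩

end Gelfand

/-- **Continuum of solutions with arbitrarily large norm on finite graphs**: for a weighted
graph, `Ω` finite and `m^G`-connected with nonempty boundary, and `f ∈ C¹([0,∞))` strictly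
convex, increasing, `f(0) > 0` and superlinear, for every `0 < ε < λ*` there exists
`0 < λ < ε` and a solution `u^λ` of `(P(λ f))` with `‖u^λ‖_∞ = g₂⁻¹(ε)`; moreover `(λ, u^λ)`
lies in the connected component of `(0, 0)` in the solution set
`S* = {(λ, u) ∈ [0, λ*] × (V → ℝ) : u solves (P(λ f))}`. -/
theorem graph_continuum_branch {V : Type*}
    (w : V → V → ℝ) (hsym : ∀ x y, w x y = w y x) (hnn : ∀ x y, 0 ≤ w x y)
    (hlocfin : ∀ x, {y | 0 < w x y}.Finite) (hdeg : ∀ x, 0 < degG w x)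
    (Ω : Set V) (hΩfin : Ω.Finite) (hΩne : Ω.Nonempty)
    (hbdry : (bdryG w Ω).Nonempty) (hconn : connG w Ω)
    (f : ℝ → ℝ) (hC1 : ContDiffOn ℝ 1 f (Set.Ici 0))
    (hconv : StrictConvexOn ℝ (Set.Ici 0) f)
    (hmono : MonotoneOn f (Set.Ici 0)) (hf0 : 0 < f 0)
    (hsup : Filter.Tendsto (fun s => f s / s) Filter.atTop Filter.atTop)
    (s₀ : ℝ) (hs₀pos : 0 < s₀)
    (hs₀eq : f s₀ = s₀ * derivWithin f (Set.Ici 0) s₀)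
    (g2inv : ℝ → ℝ)
    (hg2 : ∀ t : ℝ, 0 < t → t ≤ s₀ / f s₀ →
      s₀ ≤ g2inv t ∧ g2inv t / f (g2inv t) = t) :
    ∀ ε : ℝ, 0 < ε → ε < lamStarG w Ω f →
      ∃ lam : ℝ, ∃ usol : V → ℝ, 0 < lam ∧ lam < ε ∧ IsSolG w Ω lam f usol ∧
        (⨆ x ∈ closG w Ω, |usol x|) = g2inv ε ∧
        (lam, usol) ∈ connectedComponentIn
          {p : ℝ × (V → ℝ) | p.1 ∈ Set.Icc 0 (lamStarG w Ω f) ∧ IsSolG w Ω p.1 f p.2}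
          (0, fun _ => 0) := by
  intro ε hε hεlam
  have hfpos : ∀ s, 0 ≤ s → 0 < f s := fun s hs => hf0.trans_le (hmono self_mem_Ici hs hs)
  have hc : 0 < derivWithin f (Ici 0) s₀ :=
    pos_of_mul_pos_right (hs₀eq ▸ hfpos s₀ hs₀pos.le) hs₀pos.le
  have hcf : ∀ s, 0 ≤ s → derivWithin f (Ici 0) s₀ * s ≤ f s := fun s hs =>
    mul_le_of_convexOn_of_hasDerivWithinAt hconv.convexOn hs₀pos.le
      (hC1.differentiableOn one_ne_zero s₀ hs₀pos.le).hasDerivWithinAt hs₀eq hs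
  have hεs₀ : ε ≤ s₀ / f s₀ := by
    rw [hs₀eq, div_mul_cancel_left₀ hs₀pos.ne']
    exact hεlam.le.trans (lamStarG_le_inv hnn hdeg hΩfin hΩne hfpos hc hcf)
  obtain ⟨hs₀M, hMε⟩ := hg2 ε hε hεs₀
  have hbranch := graph_continuum_branch_general hsym hnn hdeg hΩfin hbdry hconn
    hC1.continuousOn hfpos hc hcf (hs₀pos.trans_le hs₀M)
  rw [hMε] at hbranch
  exact hbranch
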